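/- Let V be a real vector space with a quaternionic triple and let ξ ∈ V^*. Then for all a ∈ {1,2,3} and all X,Y ∈ V, S^ξ(X, J^a Y) - J^a S^ξ(X,Y) = 2 Σ_{b,c} ε^{abc} ξ(J^b X) J^c Y. In particular, for each fixed X the commutator of the endomorphism S^ξ(X,·) with each J^a lies in the real span of {J^1,J^2,J^3}. -/

import Mathlib

noncomputable section

/-- The totally antisymmetric Levi-Civita symbol on `Fin 3`, with `eps3 0 1 2 = 1`. -/
def eps3 (a b c : Fin 3) : ℝ :=
  (((b.val : ℝ) - (a.val : ℝ)) * ((c.val : ℝ) - (b.val : ℝ)) * ((c.val : ℝ) - (a.val : ℝ))) / 2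

/-- A quaternionic triple on a real vector space `V`:
`J^a ∘ J^b = -δ^{ab} id_V + Σ_c ε^{abc} J^c`. -/
def IsQuatTriple {V : Type*} [AddCommGroup V] [Module ℝ V]
    (J : Fin 3 → Module.End ℝ V) : Prop :=
  ∀ a b, J a * J b = -(if a = b then (1 : Module.End ℝ V) else 0) + ∑ c, eps3 a b c • J c

/-- For a linear form `ξ`, the endomorphism `S^ξ(X, ·)`:
`S^ξ(X,Y) = ξ(X)Y + ξ(Y)X - Σ_a ξ(J^a X) J^a Y - Σ_a ξ(J^a Y) J^a X`. -/
def SxiEnd {V : Type*} [AddCommGroup V] [Module ℝ V]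
    (J : Fin 3 → Module.End ℝ V) (ξ : V →ₗ[ℝ] ℝ) (X : V) : Module.End ℝ V :=
  ξ X • (1 : Module.End ℝ V) + ξ.smulRight X
    - (∑ a, ξ (J a X) • J a)
    - ∑ a, (ξ ∘ₗ (J a : V →ₗ[ℝ] V)).smulRight (J a X)

/-!
Up to a factor `4`, the map `A ↦ A - ∑ b, J b * A * J b` is the projection of `End V` onto the
centralizer of the `J a`. Applied to the rank-one map `ξ(·) X` it produces exactly the terms of
`S^ξ(X, ·)` in which `ξ` is evaluated on `Y`, so these terms commute with every `J a`; so does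
`ξ(X) id`. Only `-∑ b, ξ(J b X) J b` contributes to the commutator with `J a`, and
`[J a, J b] = 2 ∑ c, ε^{abc} J c` finishes the computation.
-/

lemma eps3_swap_left (a b c : Fin 3) : eps3 b a c = -eps3 a b c := by
  unfold eps3
  ring

lemma eps3_rotate (a b c : Fin 3) : eps3 c a b = eps3 a b c := by
  unfold eps3
  ring

section QuatTriple

variable {V : Type*} [AddCommGroup V] [Module ℝ V] {J : Fin 3 → Module.End ℝ V}

/-- The quaternionic symmetrization `A - ∑ b, J b * A * J b` of an endomorphism `A`, four times
its average over the conjugations by `1` and the `J b`. For a quaternionic triple it commutes with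
every `J a`. The factor `1 / 4` is left out so that the terms of `SxiEnd` appear unscaled. -/
def quatSymm (J : Fin 3 → Module.End ℝ V) (A : Module.End ℝ V) : Module.End ℝ V :=
  A - ∑ b, J b * A * J b

lemma IsQuatTriple.mul_quatSymm (hJ : IsQuatTriple J) (A : Module.End ℝ V) (a : Fin 3) :
    J a * quatSymm J A = J a * A + A * J a - ∑ b, ∑ c, eps3 a b c • (J c * A * J b) := by
  have mul_term (b : Fin 3) : J a * (J b * A * J b) =
      -(if a = b then A * J b else 0) + ∑ c, eps3 a b c • (J c * A * J b) := by
    rw [← mul_assoc, ← mul_assoc, hJ a b]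
    split_ifs <;> simp [add_mul, Finset.sum_mul]
  simp only [quatSymm, mul_sub, Finset.mul_sum, mul_term, Finset.sum_add_distrib,
    Finset.sum_neg_distrib, Finset.sum_ite_eq, Finset.mem_univ, if_true]
  abel

lemma IsQuatTriple.quatSymm_mul (hJ : IsQuatTriple J) (A : Module.End ℝ V) (a : Fin 3) :
    quatSymm J A * J a = J a * A + A * J a - ∑ b, ∑ c, eps3 b a c • (J b * A * J c) := by
  have term_mul (b : Fin 3) : J b * A * J b * J a =
      -(if b = a then J b * A else 0) + ∑ c, eps3 b a c • (J b * A * J c) := by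
    rw [mul_assoc, hJ b a]
    split_ifs <;> simp [mul_add, Finset.mul_sum]
  simp only [quatSymm, sub_mul, Finset.sum_mul, term_mul, Finset.sum_add_distrib,
    Finset.sum_neg_distrib, Finset.sum_ite_eq', Finset.mem_univ, if_true]
  abel

lemma IsQuatTriple.commute_quatSymm (hJ : IsQuatTriple J) (A : Module.End ℝ V) (a : Fin 3) :
    Commute (quatSymm J A) (J a) := by
  rw [commute_iff_eq, hJ.quatSymm_mul, hJ.mul_quatSymm, Finset.sum_comm]
  simp only [eps3_rotate]

lemma IsQuatTriple.mul_sub_mul (hJ : IsQuatTriple J) (a b : Fin 3) :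
    J a * J b - J b * J a = (2 : ℝ) • ∑ c, eps3 a b c • J c := by
  rw [hJ a b, hJ b a]
  simp only [eps3_swap_left a b, neg_smul, Finset.sum_neg_distrib, eq_comm (a := b)]
  module

lemma SxiEnd_eq_quatSymm (J : Fin 3 → Module.End ℝ V) (ξ : V →ₗ[ℝ] ℝ) (X : V) :
    SxiEnd J ξ X = ξ X • 1 + quatSymm J (ξ.smulRight X) - ∑ b, ξ (J b X) • J b := by
  have conj_smulRight (b : Fin 3) :
      (ξ ∘ₗ (J b : V →ₗ[ℝ] V)).smulRight (J b X) = J b * ξ.smulRight X * J b := by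
    ext Y
    simp
  simp only [SxiEnd, quatSymm, conj_smulRight]
  abel

lemma IsQuatTriple.SxiEnd_mul_sub_mul (hJ : IsQuatTriple J) (ξ : V →ₗ[ℝ] ℝ) (X : V)
    (a : Fin 3) :
    SxiEnd J ξ X * J a - J a * SxiEnd J ξ X =
      (2 : ℝ) • ∑ b, ∑ c, (eps3 a b c * ξ (J b X)) • J c := by
  have commute_part : Commute (ξ X • 1 + quatSymm J (ξ.smulRight X)) (J a) :=
    ((Commute.one_left (J a)).smul_left (ξ X)).add_left (hJ.commute_quatSymm _ a)
  calc SxiEnd J ξ X * J a - J a * SxiEnd J ξ X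
      = ∑ b, ξ (J b X) • (J a * J b - J b * J a) := by
        rw [SxiEnd_eq_quatSymm, sub_mul, mul_sub, commute_part.eq, sub_sub_sub_cancel_left]
        simp only [Finset.sum_mul, Finset.mul_sum, smul_mul_assoc, mul_smul_comm, smul_sub,
          Finset.sum_sub_distrib]
    _ = ∑ b, ξ (J b X) • (2 : ℝ) • ∑ c, eps3 a b c • J c := by
        simp only [hJ.mul_sub_mul]
    _ = (2 : ℝ) • ∑ b, ∑ c, (eps3 a b c * ξ (J b X)) • J c := by
        simp only [smul_comm _ (2 : ℝ), ← Finset.smul_sum]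
        simp only [Finset.smul_sum, smul_smul, mul_comm (ξ _)]

lemma IsQuatTriple.SxiEnd_mul_sub_mul_mem_span (hJ : IsQuatTriple J) (ξ : V →ₗ[ℝ] ℝ) (X : V)
    (a : Fin 3) :
    SxiEnd J ξ X * J a - J a * SxiEnd J ξ X ∈ Submodule.span ℝ (Set.range J) := by
  rw [hJ.SxiEnd_mul_sub_mul]
  exact Submodule.smul_mem _ _ <| Submodule.sum_mem _ fun b _ => Submodule.sum_mem _ fun c _ =>
    Submodule.smul_mem _ _ <| Submodule.subset_span <| Set.mem_range_self c

end QuatTriple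

/-- `S^ξ(X, J^a Y) - J^a S^ξ(X,Y) = 2 Σ_{b,c} ε^{abc} ξ(J^b X) J^c Y`; in
particular the commutator of `S^ξ(X,·)` with each `J^a` lies in `span_ℝ {J^1,J^2,J^3}`. -/
theorem stmt8 {V : Type*} [AddCommGroup V] [Module ℝ V]
    (J : Fin 3 → Module.End ℝ V) (hJ : IsQuatTriple J) (ξ : V →ₗ[ℝ] ℝ) :
    (∀ (a : Fin 3) (X Y : V),
      SxiEnd J ξ X (J a Y) - J a (SxiEnd J ξ X Y)
        = (2 : ℝ) • ∑ b, ∑ c, (eps3 a b c * ξ (J b X)) • J c Y) ∧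
    (∀ (X : V) (a : Fin 3),
      SxiEnd J ξ X * J a - J a * SxiEnd J ξ X ∈ Submodule.span ℝ (Set.range J)) := by
  refine ⟨fun a X Y => ?_, fun X a => hJ.SxiEnd_mul_sub_mul_mem_span ξ X a⟩
  simpa only [LinearMap.sub_apply, Module.End.mul_apply, LinearMap.smul_apply,
    LinearMap.sum_apply] using LinearMap.congr_fun (hJ.SxiEnd_mul_sub_mul ξ X a) Y
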